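/- arXiv:0708.2853 — 2 statements merged into one kernel-verified Lean document; each statement's English description precedes it below -/
import Mathlib

section
/- The Inserting Zeros Transformation is strictly order preserving: for all nonnegative integers b < b' one has T_γ^r(b) < T_γ^r(b'). -/
/-!
The proof is a summation by parts. For `n : ℕ` let `F n b = 2 ^ n * (b / 2 ^ n)` be `b` with its
lowest `n` binary digits erased; it is monotone in `b`. The `k`-th digit block of `b` is
`F (γ k) b - F (γ (k + 1)) b`, so for every `N` with `F (γ N) b = 0`,
`insZeros γ r b = b + ∑ k < N, (2 ^ (2 r (k + 1)) - 2 ^ (2 r k)) * F (γ (k + 1)) b`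
(`partial_sum_add`, `insZeros_eq`). The coefficients are nonnegative, so the right-hand side is a
strictly increasing function of `b` plus a nondecreasing one.
-/

open Filter Set

/-- The Inserting Zeros Transformation: if `b = Σ_i ε_i 2^i` in binary, then
`insZeros γ r b = Σ_{k≥0} 2^{2rk} Σ_{i=γ(k)}^{γ(k+1)-1} ε_i 2^i`.
(Since `γ` is strictly increasing with `γ 0 = 0`, all binary digits of `b`
have index `< γ (b+1)`, so the sum over `k ∈ [0, b]` captures all of them.) -/
def insZeros (γ : ℕ → ℕ) (r : ℕ) (b : ℕ) : ℕ :=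
  ∑ k ∈ Finset.range (b + 1),
    2 ^ (2 * r * k) * ∑ i ∈ Finset.Ico (γ k) (γ (k + 1)), (b / 2 ^ i % 2) * 2 ^ i

theorem block_add (b : ℕ) {m n : ℕ} (h : m ≤ n) :
    ∑ i ∈ Finset.Ico m n, (b / 2 ^ i % 2) * 2 ^ i + 2 ^ n * (b / 2 ^ n)
      = 2 ^ m * (b / 2 ^ m) := by
  induction n, h using Nat.le_induction with
  | base => simp
  | succ n h ih =>
    rw [Finset.sum_Ico_succ_top h, ← ih, pow_succ, ← Nat.div_div_eq_div_mul]
    have := Nat.mod_add_div (b / 2 ^ n) 2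
    linear_combination 2 ^ n * this

/-- Summation by parts for the truncated transformation; the second term on the left is the
boundary term, which vanishes for large `N`. -/
theorem partial_sum_add (γ : ℕ → ℕ) (hγ : StrictMono γ) (hγ0 : γ 0 = 0) (r b N : ℕ) :
    ∑ k ∈ Finset.range N,
        2 ^ (2 * r * k) * ∑ i ∈ Finset.Ico (γ k) (γ (k + 1)), (b / 2 ^ i % 2) * 2 ^ i
      + 2 ^ (2 * r * N) * (2 ^ γ N * (b / 2 ^ γ N))
    = b + ∑ k ∈ Finset.range N,
        (2 ^ (2 * r * (k + 1)) - 2 ^ (2 * r * k)) * (2 ^ γ (k + 1) * (b / 2 ^ γ (k + 1))) := by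
  induction N with
  | zero => simp [hγ0]
  | succ N ih =>
    rw [Finset.sum_range_succ, Finset.sum_range_succ, ← add_assoc, ← ih,
      ← block_add b (hγ.monotone N.le_succ)]
    obtain ⟨c, hc⟩ : ∃ c, 2 ^ (2 * r * (N + 1)) = 2 ^ (2 * r * N) + c :=
      Nat.exists_eq_add_of_le (Nat.pow_le_pow_right two_pos (by gcongr; omega))
    rw [hc, Nat.add_sub_cancel_left, Nat.succ_eq_add_one]
    ring

/-- The upper limit `N` of the sum is free, so that the transforms of two arguments can be
expressed with a common one. -/
theorem insZeros_eq (γ : ℕ → ℕ) (hγ : StrictMono γ) (hγ0 : γ 0 = 0) (r b N : ℕ) (hN : b < N) :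
    insZeros γ r b = b + ∑ k ∈ Finset.range N,
        (2 ^ (2 * r * (k + 1)) - 2 ^ (2 * r * k)) * (2 ^ γ (k + 1) * (b / 2 ^ γ (k + 1))) := by
  have hz : ∀ i, b < i → b / 2 ^ i = 0 := fun i hi =>
    Nat.div_eq_of_lt (hi.trans Nat.lt_two_pow_self)
  rw [← partial_sum_add γ hγ hγ0, hz _ (hN.trans_le hγ.le_apply), mul_zero, mul_zero, add_zero,
    insZeros]
  refine Finset.sum_subset (Finset.range_subset_range.2 hN) fun k _ hk => ?_
  have hbk : b < k := by
    rw [Finset.mem_range] at hk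
    omega
  rw [Finset.sum_eq_zero, mul_zero]
  intro i hi
  rw [hz i ((hbk.trans_le hγ.le_apply).trans_le (Finset.mem_Ico.1 hi).1)]
  simp

/-- The Inserting Zeros Transformation is strictly order preserving. -/
theorem stmt_8 (γ : ℕ → ℕ) (hγ : StrictMono γ) (hγ0 : γ 0 = 0) (r : ℕ) (hr : 0 < r) :
    ∀ b b' : ℕ, b < b' → insZeros γ r b < insZeros γ r b' := by
  intro b b' h
  rw [insZeros_eq γ hγ hγ0 r b (b' + 1) (by omega),
    insZeros_eq γ hγ hγ0 r b' (b' + 1) (by omega)]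
  refine add_lt_add_of_lt_of_le h (Finset.sum_le_sum fun k _ => ?_)
  gcongr
end

section
/- In the recursive construction, for every k ≥ 0, every integer h' with 1 ≤ h' < h, and every integer m, one has r_{A_k, h'}(m) ≤ g. -/
/-!
The proof is by induction on `k`. Representations are encoded as multisets (`msReps`), so that the
ordering of the summands plays no role.

*Base case.* The transformation inserts `2r` zeros between consecutive blocks of binary digits, and
`h < 2 ^ (2r)`, so adding at most `h` elements of `T(B)` never carries from one block into the
next. Hence the sum of the transforms determines the sum of the original numbers
(`sum_eq_of_sum_insZeros`), and representations in `T(B)` come from representations of a single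
number in `B`. Padding with a fixed element of `B` reduces order `h'` to order `h`.

*Inductive step.* Write `q = m_k 2^{-2r}` and `R = 2^r`, so that `m_k = R² q`. Modulo `m_k` all
elements of `A_{k-1}` lie in `[-2q, 2q]` (`Aseq_residue`): for `A_0` this is due to the inserted
zeros, and the `u_i` adjoined earlier are small. The new elements are `-R q` and
`(h - 1) R q + z_k` with `|z_k| ≤ q`. A sum of at most `h - 1` elements using `i` copies of the
first and `j` copies of the second therefore lies, modulo `R² q`, at distance less than `R q / 2`
from `(j (h - 1) - i) R q`. Because `i + j ≤ h - 1`, the number `j (h - 1) - i` determines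
`(i, j)`, also modulo `R > h²` (`split_unique`). So all representations of a given `m` share the
same `i` and `j`; deleting these summands leaves a representation of one fixed number in `A_{k-1}`
of smaller or equal order, and the inductive hypothesis applies unless that order is `0`, where
only the empty representation is left (`msReps_union`).
-/


open Filter Set Pointwise

/-- `repFn A h n` is the number of representations of `n` in the form
`n = a 0 + ⋯ + a (h-1)` with `a 0 ≤ ⋯ ≤ a (h-1)` and all `a i ∈ A`;
values lie in `ℕ ∪ {∞}`. -/
noncomputable def repFn (A : Set ℤ) (h : ℕ) (n : ℤ) : ℕ∞ :=
  {a : Fin h → ℤ | Monotone a ∧ (∀ i, a i ∈ A) ∧ ∑ i, a i = n}.encard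

/-- `repFnN B h n`: the representation function of order `h` for a set of naturals. -/
noncomputable def repFnN (B : Set ℕ) (h : ℕ) (n : ℕ) : ℕ∞ :=
  {a : Fin h → ℕ | Monotone a ∧ (∀ i, a i ∈ B) ∧ ∑ i, a i = n}.encard

/-- `zseq j = j - ⌊√j⌋(⌊√j⌋ + 1)`. -/
def zseq (j : ℕ) : ℤ := (j : ℤ) - (Nat.sqrt j : ℤ) * ((Nat.sqrt j : ℤ) + 1)

/-- `m_k = 2^{2rk + γ(k)}`. -/
def mval (γ : ℕ → ℕ) (r k : ℕ) : ℤ := 2 ^ (2 * r * k + γ k)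

/-- `u_{2k-1} = -m_k·2^{-r}` (the division is exact for `k ≥ 1`). -/
def u1 (γ : ℕ → ℕ) (r k : ℕ) : ℤ := -(mval γ r k / 2 ^ r)

/-- `u_{2k} = (h-1)·m_k·2^{-r} + z_k` (the division is exact for `k ≥ 1`). -/
def u2 (γ : ℕ → ℕ) (r h k : ℕ) : ℤ := ((h : ℤ) - 1) * (mval γ r k / 2 ^ r) + zseq k

open Classical in
/-- The recursive construction: `A_0 = {a ∈ T_γ^r(B) : a ≥ n_0}` and, for `k ≥ 1`,
`A_k = A_{k-1} ∪ {u_{2k-1}, u_{2k}}` if `r_{A_{k-1},h}(z_k) < f(z_k)`, else `A_k = A_{k-1}`. -/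
noncomputable def Aseq (γ : ℕ → ℕ) (r h n0 : ℕ) (f : ℤ → ℕ∞) (B : Set ℕ) : ℕ → Set ℤ
  | 0 => {a : ℤ | (∃ b ∈ B, (insZeros γ r b : ℤ) = a) ∧ (n0 : ℤ) ≤ a}
  | k + 1 =>
    if repFn (Aseq γ r h n0 f B k) h (zseq (k + 1)) < f (zseq (k + 1)) then
      Aseq γ r h n0 f B k ∪ {u1 γ r (k + 1), u2 γ r h (k + 1)}
    else Aseq γ r h n0 f B k

/-- The `m`-fold sumset of `A` (equal to `{0}` when `m = 0`). -/
def nSumset (A : Set ℤ) : ℕ → Set ℤ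
  | 0 => {0}
  | m + 1 => A + nSumset A m

/-- `A_k^{(s,t)} = (h-s-t)·A_{k-1} + s·u_{2k-1} + t·u_{2k}`. -/
noncomputable def Ast (γ : ℕ → ℕ) (r h n0 : ℕ) (f : ℤ → ℕ∞) (B : Set ℕ)
    (k s t : ℕ) : Set ℤ :=
  (fun x => x + (s : ℤ) * u1 γ r k + (t : ℤ) * u2 γ r h k) ''
    nSumset (Aseq γ r h n0 f B (k - 1)) (h - s - t)

/-! ### Representations as multisets -/

/-- The representations of `n` as an unordered sum of `h` elements of `A`, encoded as multisets. -/
def msReps {α : Type*} [AddCommMonoid α] (A : Set α) (h : ℕ) (n : α) : Set (Multiset α) :=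
  {s | s.card = h ∧ (∀ x ∈ s, x ∈ A) ∧ s.sum = n}

lemma encard_monotone_eq_msReps {α : Type*} [AddCommMonoid α] [LinearOrder α]
    (A : Set α) (h : ℕ) (n : α) :
    {a : Fin h → α | Monotone a ∧ (∀ i, a i ∈ A) ∧ ∑ i, a i = n}.encard
      = (msReps A h n).encard := by
  have hinj : InjOn (fun a : Fin h → α => (List.ofFn a : Multiset α))
      {a : Fin h → α | Monotone a ∧ (∀ i, a i ∈ A) ∧ ∑ i, a i = n} := by
    rintro a ⟨ha, -⟩ b ⟨hb, -⟩ hab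
    have hp : (List.ofFn a).Perm (List.ofFn b) := Multiset.coe_eq_coe.mp hab
    exact List.ofFn_injective (hp.eq_of_sortedLE ha.sortedLE_ofFn hb.sortedLE_ofFn)
  rw [← hinj.encard_image]
  congr 1
  ext s
  constructor
  · rintro ⟨a, ⟨-, hA, hn⟩, rfl⟩
    refine ⟨by simp, ?_, ?_⟩
    · intro x hx
      obtain ⟨i, rfl⟩ := (List.mem_ofFn' a x).mp (by simpa using hx)
      exact hA i
    · simpa [List.sum_ofFn] using hn
  · rintro ⟨hc, hA, hn⟩
    have hlen : (s.sort).length = h := by simpa using hc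
    have hofn : List.ofFn (fun i : Fin h => s.sort.get (i.cast hlen.symm)) = s.sort := by
      subst hlen
      exact List.ofFn_get _
    have hms : ((List.ofFn (fun i : Fin h => s.sort.get (i.cast hlen.symm)) : List α) :
        Multiset α) = s := by rw [hofn, Multiset.sort_eq]
    refine ⟨fun i : Fin h => s.sort.get (i.cast hlen.symm), ⟨?_, ?_, ?_⟩, hms⟩
    · rw [← List.sortedLE_ofFn_iff, hofn]
      exact (Multiset.pairwise_sort s (· ≤ ·)).sortedLE
    · intro i
      apply hA
      rw [← Multiset.mem_sort (r := (· ≤ ·))]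
      exact List.get_mem _ _
    · rw [← List.sum_ofFn, hofn, ← hn]
      conv_rhs => rw [← Multiset.sort_eq s (· ≤ ·)]
      exact (Multiset.sum_coe _).symm

lemma repFn_eq (A : Set ℤ) (h : ℕ) (n : ℤ) : repFn A h n = (msReps A h n).encard :=
  encard_monotone_eq_msReps A h n

lemma repFnN_eq (B : Set ℕ) (h n : ℕ) : repFnN B h n = (msReps B h n).encard :=
  encard_monotone_eq_msReps B h n

/-! ### The Inserting Zeros Transformation -/

/-- The block of binary digits of `b` at the positions `γ k ≤ i < γ (k + 1)`. -/
def blk (γ : ℕ → ℕ) (b k : ℕ) : ℕ :=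
  ∑ i ∈ Finset.Ico (γ k) (γ (k + 1)), (b / 2 ^ i % 2) * 2 ^ i

/-- The first `j` shifted blocks of the Inserting Zeros Transformation of `b`. -/
def insPart (γ : ℕ → ℕ) (r j b : ℕ) : ℕ :=
  ∑ k ∈ Finset.range j, 2 ^ (2 * r * k) * blk γ b k

lemma sum_bits (b n : ℕ) : ∑ i ∈ Finset.range n, (b / 2 ^ i % 2) * 2 ^ i = b % 2 ^ n := by
  induction n with
  | zero => simp [Nat.mod_one]
  | succ n ih => rw [Finset.sum_range_succ, ih, Nat.mod_pow_succ]; ring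

lemma sum_blk {γ : ℕ → ℕ} (hγ : StrictMono γ) (hγ0 : γ 0 = 0) (b j : ℕ) :
    ∑ k ∈ Finset.range j, blk γ b k = b % 2 ^ γ j := by
  induction j with
  | zero => simp [hγ0, Nat.mod_one]
  | succ j ih =>
    rw [Finset.sum_range_succ, ih, ← sum_bits, ← sum_bits, blk,
      Finset.sum_range_add_sum_Ico _ (hγ.monotone (Nat.le_succ j))]

lemma sum_blk_self {γ : ℕ → ℕ} (hγ : StrictMono γ) (hγ0 : γ 0 = 0) {b j : ℕ} (h : b ≤ j) :
    ∑ k ∈ Finset.range j, blk γ b k = b := by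
  rw [sum_blk hγ hγ0]
  refine Nat.mod_eq_of_lt ?_
  calc b < 2 ^ b := Nat.lt_two_pow_self
    _ ≤ 2 ^ γ j := Nat.pow_le_pow_right (by norm_num) (h.trans (hγ.le_apply))

lemma pow_dvd_blk {γ : ℕ → ℕ} (b k : ℕ) : 2 ^ γ k ∣ blk γ b k := by
  refine Finset.dvd_sum fun i hi => Dvd.dvd.mul_left ?_ _
  exact pow_dvd_pow 2 (Finset.mem_Ico.mp hi).1

lemma blk_eq_zero {γ : ℕ → ℕ} (hγ : StrictMono γ) {b k : ℕ} (h : b ≤ k) : blk γ b k = 0 := by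
  refine Finset.sum_eq_zero fun i hi => ?_
  have h1 : k ≤ i := hγ.le_apply.trans (Finset.mem_Ico.mp hi).1
  rw [Nat.div_eq_of_lt ((Nat.lt_two_pow_self).trans_le
    (Nat.pow_le_pow_right (by norm_num) (h.trans h1)))]
  simp

/-- Beyond its first `j` blocks, `T b` is a multiple of `m_j`. -/
lemma insZeros_eq_s13 {γ : ℕ → ℕ} (hγ : StrictMono γ) (r b j : ℕ) :
    ∃ c, insZeros γ r b = insPart γ r j b + 2 ^ (2 * r * j + γ j) * c := by
  have hbig : insZeros γ r b = insPart γ r (b + 1 + j) b := by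
    rw [insPart, Finset.sum_range_add]
    have : ∑ x ∈ Finset.range j, 2 ^ (2 * r * (b + 1 + x)) * blk γ b (b + 1 + x) = 0 :=
      Finset.sum_eq_zero fun x _ => by rw [blk_eq_zero hγ (by omega), mul_zero]
    rw [this, add_zero]
    rfl
  have hd : 2 ^ (2 * r * j + γ j) ∣
      ∑ x ∈ Finset.range (b + 1), 2 ^ (2 * r * (j + x)) * blk γ b (j + x) := by
    refine Finset.dvd_sum fun x _ => ?_
    rw [pow_add]
    refine mul_dvd_mul (pow_dvd_pow 2 (Nat.mul_le_mul_left _ (by omega))) ?_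
    exact (pow_dvd_pow 2 (hγ.monotone (by omega))).trans (pow_dvd_blk b _)
  obtain ⟨c, hc⟩ := hd
  refine ⟨c, ?_⟩
  rw [hbig, add_comm (b + 1) j, insPart, Finset.sum_range_add, hc, insPart]

/-- The `2r` zeros inserted below position `2rj + γ j` leave the factor `2 ^ (2r)` of room between
the first `j` blocks and `m_j`. -/
lemma insPart_lt {γ : ℕ → ℕ} (hγ : StrictMono γ) (hγ0 : γ 0 = 0) (r j b : ℕ) :
    2 ^ (2 * r) * insPart γ r j b < 2 ^ (2 * r * j + γ j) := by
  calc 2 ^ (2 * r) * insPart γ r j b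
      ≤ 2 ^ (2 * r * j) * ∑ k ∈ Finset.range j, blk γ b k := by
        rw [insPart, Finset.mul_sum, Finset.mul_sum]
        refine Finset.sum_le_sum fun k hk => ?_
        rw [← mul_assoc, ← pow_add]
        refine Nat.mul_le_mul_right _ (Nat.pow_le_pow_right (by norm_num) ?_)
        have := Nat.mul_le_mul_left (2 * r) (Finset.mem_range.mp hk)
        rw [Nat.mul_succ] at this
        omega
    _ < 2 ^ (2 * r * j) * 2 ^ γ j := by
        rw [sum_blk hγ hγ0]
        exact Nat.mul_lt_mul_of_pos_left (Nat.mod_lt _ (by positivity)) (by positivity)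
    _ = _ := (pow_add _ _ _).symm

/-- Adding at most `h < 2 ^ (2r)` transforms produces no carry from the first `j` blocks into the
later ones, so the sum of the first `j` blocks is the residue of the whole sum modulo `m_j`. -/
lemma sum_insPart {γ : ℕ → ℕ} (hγ : StrictMono γ) (hγ0 : γ 0 = 0) {r h : ℕ} (hr : h < 2 ^ (2 * r))
    (j : ℕ) (s : Multiset ℕ) (hs : s.card ≤ h) :
    (s.map (insPart γ r j)).sum = (s.map (insZeros γ r)).sum % 2 ^ (2 * r * j + γ j) := by
  have hdiv : ∃ c, (s.map (insZeros γ r)).sum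
      = (s.map (insPart γ r j)).sum + 2 ^ (2 * r * j + γ j) * c := by
    clear hs
    induction s using Multiset.induction with
    | empty => exact ⟨0, by simp⟩
    | cons a s ih =>
      obtain ⟨c, hc⟩ := ih
      obtain ⟨d, hd⟩ := insZeros_eq_s13 hγ r a j
      refine ⟨c + d, ?_⟩
      rw [Multiset.map_cons, Multiset.sum_cons, Multiset.map_cons, Multiset.sum_cons, hc, hd]
      ring
  have hlt : (s.map (insPart γ r j)).sum < 2 ^ (2 * r * j + γ j) := by
    have h1 : ((s.map (insPart γ r j)).map (fun x => 2 ^ (2 * r) * x)).sum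
        ≤ s.card * 2 ^ (2 * r * j + γ j) := by
      have := Multiset.sum_le_card_nsmul
        ((s.map (insPart γ r j)).map (fun x => 2 ^ (2 * r) * x)) (2 ^ (2 * r * j + γ j)) (by
          intro x hx
          simp only [Multiset.map_map, Multiset.mem_map, Function.comp] at hx
          obtain ⟨b, -, rfl⟩ := hx
          exact (insPart_lt hγ hγ0 r j b).le)
      simpa using this
    rw [Multiset.sum_map_mul_left, Multiset.map_id'] at h1
    have h2 : s.card * 2 ^ (2 * r * j + γ j) < 2 ^ (2 * r) * 2 ^ (2 * r * j + γ j) :=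
      Nat.mul_lt_mul_of_pos_right (hs.trans_lt hr) (by positivity)
    exact Nat.lt_of_mul_lt_mul_left (h1.trans_lt h2)
  obtain ⟨c, hc⟩ := hdiv
  rw [hc, Nat.add_mul_mod_self_left, Nat.mod_eq_of_lt hlt]

/-- A sum of at most `h` transforms determines the sum of the original numbers. -/
lemma sum_eq_of_sum_insZeros {γ : ℕ → ℕ} (hγ : StrictMono γ) (hγ0 : γ 0 = 0) {r h : ℕ}
    (hr : h < 2 ^ (2 * r)) (s t : Multiset ℕ) (hs : s.card ≤ h) (ht : t.card ≤ h)
    (hst : (s.map (insZeros γ r)).sum = (t.map (insZeros γ r)).sum) : s.sum = t.sum := by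
  have hpart : ∀ j, (s.map (insPart γ r j)).sum = (t.map (insPart γ r j)).sum := fun j => by
    rw [sum_insPart hγ hγ0 hr j s hs, sum_insPart hγ hγ0 hr j t ht, hst]
  have hsucc : ∀ (u : Multiset ℕ) (j : ℕ), (u.map (insPart γ r (j + 1))).sum
      = (u.map (insPart γ r j)).sum + 2 ^ (2 * r * j) * (u.map (fun b => blk γ b j)).sum := by
    intro u j
    rw [← Multiset.sum_map_mul_left, ← Multiset.sum_map_add]
    refine congrArg Multiset.sum (Multiset.map_congr rfl fun b _ => ?_)
    exact Finset.sum_range_succ _ _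
  have hblk : ∀ j, (s.map (fun b => blk γ b j)).sum = (t.map (fun b => blk γ b j)).sum := by
    intro j
    have h1 := hpart (j + 1)
    rw [hsucc, hsucc, hpart j] at h1
    exact Nat.eq_of_mul_eq_mul_left (by positivity) (Nat.add_left_cancel h1)
  have htr : ∀ j, (s.map (fun b => ∑ k ∈ Finset.range j, blk γ b k)).sum
      = (t.map (fun b => ∑ k ∈ Finset.range j, blk γ b k)).sum := by
    intro j
    induction j with
    | zero => simp
    | succ j ih =>
      simp only [Finset.sum_range_succ, Multiset.sum_map_add]
      rw [ih, hblk]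
  have hid : ∀ (u : Multiset ℕ) (j : ℕ), u.sum ≤ j →
      u.map (fun b => ∑ k ∈ Finset.range j, blk γ b k) = u := by
    intro u j huj
    conv_rhs => rw [← Multiset.map_id u]
    refine Multiset.map_congr rfl fun b hb => ?_
    exact sum_blk_self hγ hγ0 ((Multiset.le_sum_of_mem hb).trans huj)
  have := htr (s.sum + t.sum)
  rwa [hid s _ (by omega), hid t _ (by omega)] at this

/-- A `B_h[g]` set is also a `B_{h'}[g]` set for `1 ≤ h' ≤ h`: pad every representation with
`h - h'` copies of one fixed element. -/
lemma msReps_le_of_le {B : Set ℕ} {h h' g : ℕ} (hB : ∀ n : ℕ, (msReps B h n).encard ≤ g)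
    (h1 : 1 ≤ h') (hle : h' ≤ h) (n : ℕ) : (msReps B h' n).encard ≤ g := by
  rcases (msReps B h' n).eq_empty_or_nonempty with he | ⟨s, hc, hs, -⟩
  · simp [he]
  obtain ⟨b, hb⟩ := Multiset.card_pos_iff_exists_mem.mp (show 0 < s.card by omega)
  refine le_trans ?_ (hB (n + (h - h') * b))
  refine encard_le_encard_of_injOn (f := fun t => t + Multiset.replicate (h - h') b) ?_ ?_
  · rintro t ⟨htc, ht, htn⟩
    refine ⟨by simp [htc]; omega, ?_, by simp [htn]⟩
    intro x hx
    rcases Multiset.mem_add.mp hx with hx | hx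
    · exact ht x hx
    · rw [Multiset.eq_of_mem_replicate hx]
      exact hs b hb
  · intro t _ t' _ h
    exact add_right_cancel h

/-- The image of a `B_h[g]` set under the Inserting Zeros Transformation has at most `g`
representations of each order `1 ≤ h' ≤ h`. -/
lemma msReps_insZeros {γ : ℕ → ℕ} (hγ : StrictMono γ) (hγ0 : γ 0 = 0) {r h g : ℕ}
    (hr : h < 2 ^ (2 * r)) {B : Set ℕ} (hB : ∀ n : ℕ, (msReps B h n).encard ≤ g)
    {A : Set ℤ} (hA : ∀ a ∈ A, ∃ b ∈ B, (insZeros γ r b : ℤ) = a)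
    {h' : ℕ} (h1 : 1 ≤ h') (hle : h' ≤ h) (n : ℤ) : (msReps A h' n).encard ≤ g := by
  rcases (msReps A h' n).eq_empty_or_nonempty with he | ⟨s, hs⟩
  · simp [he]
  have hlift : ∀ s : Multiset ℤ, (∀ x ∈ s, x ∈ A) → ∃ t : Multiset ℕ, (∀ x ∈ t, x ∈ B) ∧
      t.map (fun b => (insZeros γ r b : ℤ)) = s := by
    intro s
    induction s using Multiset.induction with
    | empty => exact fun _ => ⟨0, by simp, by simp⟩
    | cons a s ih =>
      intro hs
      obtain ⟨t, ht, rfl⟩ := ih fun x hx => hs x (Multiset.mem_cons_of_mem hx)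
      obtain ⟨b, hb, rfl⟩ := hA a (hs a (Multiset.mem_cons_self _ _))
      refine ⟨b ::ₘ t, ?_, by simp⟩
      intro x hx
      rcases Multiset.mem_cons.mp hx with rfl | hx
      exacts [hb, ht x hx]
  have hsum : ∀ t : Multiset ℕ, (t.map (fun b => (insZeros γ r b : ℤ))).sum
      = ((t.map (insZeros γ r)).sum : ℕ) := fun t => by
    rw [Nat.cast_multiset_sum, Multiset.map_map]; rfl
  obtain ⟨hc, hsA, hsn⟩ := hs
  obtain ⟨t, -, rfl⟩ := hlift s hsA
  refine le_trans ?_ (msReps_le_of_le hB h1 hle t.sum)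
  refine le_trans (encard_le_encard ?_)
    (encard_image_le (fun u => u.map (fun b => (insZeros γ r b : ℤ))) _)
  rintro s' ⟨hc', hsA', hsn'⟩
  obtain ⟨t', ht', rfl⟩ := hlift s' hsA'
  refine ⟨t', ⟨by simpa using hc', ht', ?_⟩, rfl⟩
  rw [Multiset.card_map] at hc hc'
  refine sum_eq_of_sum_insZeros hγ hγ0 hr t' t (by omega) (by omega) ?_
  rw [← hsn, hsum, hsum] at hsn'
  exact_mod_cast hsn'

/-! ### Adjoining two elements -/

/-- Every multiset in `A ∪ {u, v}` splits into copies of `u`, copies of `v` and a part in `A`. -/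
lemma exists_split {A : Set ℤ} {u v : ℤ} (s : Multiset ℤ) (hs : ∀ x ∈ s, x ∈ A ∪ {u, v}) :
    ∃ (i j : ℕ) (t : Multiset ℤ), (∀ x ∈ t, x ∈ A) ∧
      s = Multiset.replicate i u + Multiset.replicate j v + t := by
  induction s using Multiset.induction with
  | empty => exact ⟨0, 0, 0, by simp, by simp⟩
  | cons a s ih =>
    obtain ⟨i, j, t, ht, rfl⟩ := ih fun x hx => hs x (Multiset.mem_cons_of_mem hx)
    rcases hs a (Multiset.mem_cons_self _ _) with ha | rfl | rfl
    · refine ⟨i, j, a ::ₘ t, ?_, by simp⟩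
      intro x hx
      rcases Multiset.mem_cons.mp hx with rfl | hx
      exacts [ha, ht x hx]
    · exact ⟨i + 1, j, t, ht, by simp [Multiset.replicate_succ]⟩
    · exact ⟨i, j + 1, t, ht, by simp [Multiset.replicate_succ]⟩

lemma exists_small_residue {A : Set ℤ} {N q : ℤ}
    (hA : ∀ a ∈ A, ∃ c : ℤ, |c| ≤ 2 * q ∧ N ∣ a - c) (t : Multiset ℤ) (ht : ∀ x ∈ t, x ∈ A) :
    ∃ c : ℤ, |c| ≤ 2 * q * t.card ∧ N ∣ t.sum - c := by
  induction t using Multiset.induction with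
  | empty => exact ⟨0, by simp, by simp⟩
  | cons a t ih =>
    obtain ⟨c, hc, hd⟩ := ih fun x hx => ht x (Multiset.mem_cons_of_mem hx)
    obtain ⟨c', hc', hd'⟩ := hA a (ht a (Multiset.mem_cons_self _ _))
    refine ⟨c' + c, ?_, ?_⟩
    · have := abs_add_le c' c
      rw [Multiset.card_cons]
      push_cast
      linarith
    · rw [Multiset.sum_cons]
      rw [add_sub_add_comm]
      exact dvd_add hd' hd

/-- For `i, j ≥ 0` with `i + j ≤ h - 1`, the number `j (h - 1) - i` determines `(i, j)`; here `H`
stands for `h - 1`. -/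
lemma pair_eq {i j i' j' : ℕ} {H : ℕ} (hH : 1 ≤ H) (h1 : i + j ≤ H) (h2 : i' + j' ≤ H)
    (he : (j : ℤ) * H - i = j' * H - i') : i = i' ∧ j = j' := by
  have key : ∀ {i j i' j' : ℕ}, i + j ≤ H → (j : ℤ) * H - i = j' * H - i' → ¬ j' < j := by
    intro i j i' j' h1 he hlt
    have hl : ((j' : ℤ) + 1) * H ≤ j * H :=
      mul_le_mul_of_nonneg_right (by exact_mod_cast hlt) (by positivity)
    rw [add_mul, one_mul] at hl
    omega
  have hj : j = j' := by
    have := key h1 he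
    have := key h2 he.symm
    omega
  subst hj
  exact ⟨by omega, rfl⟩

/-- Modulo `R² q`, the value of `i u + j v + Σ t`, where `u = -R q`, `v = H R q + z` and the elements
of `t` have residues of size `O(q)`, lies close to the multiple `(j H - i) R q` of `R q`; since `R`
is large the pair `(i, j)` can be read off. -/
lemma split_unique {A : Set ℤ} {R q z : ℤ} {H : ℕ} (hq : 0 < q) (hH : 1 ≤ H)
    (hR : 4 * (H : ℤ) < R) (hR' : (H : ℤ) * (H + 1) < R) (hz : |z| ≤ q)
    (hA : ∀ a ∈ A, ∃ c : ℤ, |c| ≤ 2 * q ∧ R * (R * q) ∣ a - c)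
    {i j i' j' : ℕ} {t t' : Multiset ℤ} (ht : ∀ x ∈ t, x ∈ A) (ht' : ∀ x ∈ t', x ∈ A)
    (hc : i + j + t.card ≤ H) (hc' : i' + j' + t'.card ≤ H)
    (he : i * (-(R * q)) + j * (H * (R * q) + z) + t.sum
      = i' * (-(R * q)) + j' * (H * (R * q) + z) + t'.sum) : i = i' ∧ j = j' := by
  have hsize : ∀ {i j : ℕ} {t : Multiset ℤ} {c : ℤ}, i + j + t.card ≤ H →
      |c| ≤ 2 * q * t.card → |j * z + c| ≤ 2 * q * H := by
    intro i j t c hc hcs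
    have h1 : |(j : ℤ) * z| ≤ j * q := by
      rw [abs_mul, Nat.abs_cast]
      exact mul_le_mul_of_nonneg_left hz (by positivity)
    have h2 : ((i : ℤ) + j + t.card) * q ≤ H * q :=
      mul_le_mul_of_nonneg_right (by exact_mod_cast hc) hq.le
    have h3 : 0 ≤ (i : ℤ) * q := by positivity
    have h4 : 0 ≤ (j : ℤ) * q := by positivity
    have := abs_add_le ((j : ℤ) * z) c
    nlinarith
  obtain ⟨c, hcs, d, hd⟩ := exists_small_residue hA t ht
  obtain ⟨c', hcs', d', hd'⟩ := exists_small_residue hA t' ht'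
  have h1 := hsize hc hcs
  have h2 := hsize hc' hcs'
  have hmain : (j' * z + c') - (j * z + c)
      = R * q * ((j * H - i) - (j' * H - i') + R * (d - d')) := by
    linear_combination -he + hd - hd'
  have hzero : (j' * z + c') - (j * z + c) = 0 := by
    refine Int.eq_zero_of_abs_lt_dvd (m := R * q) ⟨_, hmain⟩ ?_
    have := abs_sub (j' * z + c') (j * z + c)
    nlinarith
  rw [hzero] at hmain
  have hRq : R * q ≠ 0 := by
    have : 0 < R := by have : (0 : ℤ) ≤ H := by positivity
                       linarith
    positivity
  have hD : ((j : ℤ) * H - i) - (j' * H - i') = R * (d' - d) := by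
    have := (mul_eq_zero.mp hmain.symm).resolve_left hRq
    linear_combination this
  have hD0 : ((j : ℤ) * H - i) - (j' * H - i') = 0 := by
    refine Int.eq_zero_of_abs_lt_dvd (m := R) ⟨_, hD⟩ ?_
    have b1 : (j : ℤ) * H ≤ H * H := mul_le_mul_of_nonneg_right (by omega) (by positivity)
    have b2 : (j' : ℤ) * H ≤ H * H := mul_le_mul_of_nonneg_right (by omega) (by positivity)
    have b3 : 0 ≤ (j : ℤ) * H := by positivity
    have b4 : 0 ≤ (j' : ℤ) * H := by positivity
    have b5 : (i : ℤ) ≤ H := by omega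
    have b6 : (i' : ℤ) ≤ H := by omega
    rw [abs_lt]
    constructor <;> nlinarith
  exact pair_eq hH (by omega) (by omega) (by linarith)

/-- If all elements of `A` have small residues, adjoining `u = -R q` and `v = H R q + z` keeps the
number of representations of each order `h' ≤ H` at most `g`. -/
lemma msReps_union {A : Set ℤ} {R q z : ℤ} {H g : ℕ} (hg : 1 ≤ g) (hq : 0 < q) (hH : 1 ≤ H)
    (hR : 4 * (H : ℤ) < R) (hR' : (H : ℤ) * (H + 1) < R) (hz : |z| ≤ q)
    (hA : ∀ a ∈ A, ∃ c : ℤ, |c| ≤ 2 * q ∧ R * (R * q) ∣ a - c)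
    (hrep : ∀ h', 1 ≤ h' → h' ≤ H → ∀ m, (msReps A h' m).encard ≤ g)
    {h' : ℕ} (hle : h' ≤ H) (m : ℤ) :
    (msReps (A ∪ {-(R * q), H * (R * q) + z}) h' m).encard ≤ g := by
  set u := -(R * q) with hu
  set v := H * (R * q) + z with hv
  rcases (msReps (A ∪ {u, v}) h' m).eq_empty_or_nonempty with he | ⟨s, hs⟩
  · rw [he, encard_empty]
    exact zero_le
  obtain ⟨hc, hsA, hsm⟩ := hs
  obtain ⟨i, j, t, ht, rfl⟩ := exists_split s hsA
  simp only [Multiset.card_add, Multiset.card_replicate] at hc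
  simp only [Multiset.sum_add, Multiset.sum_replicate, nsmul_eq_mul] at hsm
  -- All representations of `m` contain the same numbers `i`, `j` of copies of `u` and `v`.
  have hsub : msReps (A ∪ {u, v}) h' m ⊆
      (fun t => Multiset.replicate i u + Multiset.replicate j v + t) ''
        msReps A (h' - i - j) (m - i * u - j * v) := by
    rintro s' ⟨hc', hsA', hsm'⟩
    obtain ⟨i', j', t', ht', rfl⟩ := exists_split s' hsA'
    simp only [Multiset.card_add, Multiset.card_replicate] at hc'
    simp only [Multiset.sum_add, Multiset.sum_replicate, nsmul_eq_mul] at hsm'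
    obtain ⟨rfl, rfl⟩ := split_unique hq hH hR hR' hz hA ht ht' (by omega) (by omega)
      (hsm.trans hsm'.symm)
    exact ⟨t', ⟨by omega, ht', by linarith⟩, rfl⟩
  refine (encard_le_encard hsub).trans ((encard_image_le _ _).trans ?_)
  rcases Nat.eq_zero_or_pos (h' - i - j) with h0 | h0
  · rw [h0]
    refine le_trans ?_ (show (1 : ℕ∞) ≤ g by exact_mod_cast hg)
    -- Only the empty multiset has cardinality `0`.
    rw [encard_le_one_iff]
    rintro a b ⟨ha, -⟩ ⟨hb, -⟩
    rw [Multiset.card_eq_zero.mp ha, Multiset.card_eq_zero.mp hb]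
  · exact hrep _ h0 (by omega) _

/-! ### Residues of the elements of `A_k` -/

lemma abs_zseq_le (j : ℕ) : |zseq j| ≤ j := by
  have h1 : (Nat.sqrt j : ℤ) * Nat.sqrt j ≤ j := by exact_mod_cast Nat.sqrt_le j
  have h2 : (j : ℤ) ≤ Nat.sqrt j * Nat.sqrt j + Nat.sqrt j + Nat.sqrt j := by
    exact_mod_cast Nat.sqrt_le_add j
  have h3 : (Nat.sqrt j : ℤ) ≤ j := by exact_mod_cast Nat.sqrt_le_self j
  rw [zseq, abs_le]
  constructor <;> nlinarith

/-- `m_{k+1} 2^{-2r}`, the unit in which residues of elements of `A_k` modulo `m_{k+1}` are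
measured; the index is shifted by one because `m_0 2^{-2r}` need not be an integer. -/
def qval (γ : ℕ → ℕ) (r k : ℕ) : ℤ := 2 ^ (2 * r * k + γ (k + 1))

lemma mval_succ (γ : ℕ → ℕ) (r k : ℕ) :
    mval γ r (k + 1) = 2 ^ r * (2 ^ r * qval γ r k) := by
  rw [mval, qval, ← pow_add, ← pow_add]
  congr 1
  ring

lemma mval_div (γ : ℕ → ℕ) (r k : ℕ) :
    mval γ r (k + 1) / 2 ^ r = 2 ^ r * qval γ r k := by
  rw [mval_succ]
  exact Int.mul_ediv_cancel_left _ (by positivity)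

lemma natCast_le_qval {γ : ℕ → ℕ} (hγ : StrictMono γ) (r k : ℕ) : ((k + 1 : ℕ) : ℤ) ≤ qval γ r k := by
  have h1 : k + 1 ≤ 2 ^ (2 * r * k + γ (k + 1)) :=
    (Nat.lt_two_pow_self).le.trans (Nat.pow_le_pow_right (by norm_num)
      ((hγ.le_apply (x := k + 1)).trans (Nat.le_add_left _ _)))
  rw [qval]
  exact_mod_cast h1

lemma mval_le_qval {γ : ℕ → ℕ} (hγ : StrictMono γ) {r i k : ℕ} (hik : i + 1 ≤ k) :
    2 ^ r * (2 ^ r * qval γ r i) ≤ qval γ r k := by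
  rw [← mval_succ, mval, qval]
  exact pow_le_pow_right₀ (by norm_num)
    (add_le_add (Nat.mul_le_mul_left _ hik) (hγ.monotone (by omega)))

/-- Elements of `A_i` have small residues modulo `m_{k+1}` for `i ≤ k`: those of `A_0` because of
the inserted zeros, the adjoined ones because they are small themselves. -/
lemma Aseq_residue {γ : ℕ → ℕ} (hγ : StrictMono γ) (hγ0 : γ 0 = 0) {r h n0 : ℕ} {f : ℤ → ℕ∞}
    {B : Set ℕ} (hh : 2 ≤ h) (hr : (h : ℤ) ≤ 2 ^ r) (k i : ℕ) (hik : i ≤ k) :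
    ∀ a ∈ Aseq γ r h n0 f B i, ∃ c : ℤ, |c| ≤ 2 * qval γ r k ∧
      2 ^ r * (2 ^ r * qval γ r k) ∣ a - c := by
  have hqpos : ∀ i, 0 < qval γ r i := fun i => by rw [qval]; positivity
  induction i with
  | zero =>
    rintro a ⟨⟨b, -, rfl⟩, -⟩
    obtain ⟨c, hc⟩ := insZeros_eq_s13 hγ r b (k + 1)
    have hlt := insPart_lt hγ hγ0 r (k + 1) b
    refine ⟨insPart γ r (k + 1) b, ?_, c, ?_⟩
    · have h1 : (2 : ℤ) ^ (2 * r) * insPart γ r (k + 1) b < 2 ^ (2 * r) * qval γ r k := by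
        have h2 : (2 : ℤ) ^ (2 * r) * qval γ r k = 2 ^ (2 * r * (k + 1) + γ (k + 1)) := by
          rw [qval, ← pow_add]; congr 1; ring
        rw [h2]
        exact_mod_cast hlt
      have h2 := lt_of_mul_lt_mul_left h1 (by positivity)
      rw [Nat.abs_cast]
      linarith [hqpos k]
    · rw [← mval_succ, mval, hc]
      push_cast
      ring
  | succ i ih =>
    intro a ha
    have hM := mval_le_qval hγ (r := r) hik
    have hMpos : 0 < 2 ^ r * qval γ r i := mul_pos (by positivity) (hqpos i)
    have hone : (1 : ℤ) ≤ 2 ^ r := one_le_pow₀ (by norm_num)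
    have hnew : ∀ a ∈ Aseq γ r h n0 f B i ∪ {u1 γ r (i + 1), u2 γ r h (i + 1)},
        ∃ c : ℤ, |c| ≤ 2 * qval γ r k ∧ 2 ^ r * (2 ^ r * qval γ r k) ∣ a - c := by
      rintro a (ha | rfl | rfl)
      · exact ih (by omega) a ha
      · refine ⟨_, ?_, by rw [sub_self]; exact dvd_zero _⟩
        rw [u1, mval_div, abs_neg, abs_of_pos hMpos]
        nlinarith [hqpos k]
      · refine ⟨_, ?_, by rw [sub_self]; exact dvd_zero _⟩
        have hh' : (2 : ℤ) ≤ h := by exact_mod_cast hh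
        have h1 : ((h : ℤ) - 1) * (2 ^ r * qval γ r i) ≤ qval γ r k :=
          (mul_le_mul_of_nonneg_right (by linarith) hMpos.le).trans hM
        have h0 : 0 ≤ ((h : ℤ) - 1) * (2 ^ r * qval γ r i) :=
          mul_nonneg (by linarith) hMpos.le
        have h2 := abs_zseq_le (i + 1)
        have h3 := natCast_le_qval hγ r k
        have h4 := abs_add_le (((h : ℤ) - 1) * (2 ^ r * qval γ r i)) (zseq (i + 1))
        rw [abs_of_nonneg h0] at h4
        rw [u2, mval_div]
        push_cast at h2 h3
        have h5 : (i : ℤ) + 1 ≤ k := by exact_mod_cast hik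
        linarith
    rw [Aseq] at ha
    split_ifs at ha
    · exact hnew a ha
    · exact ih (by omega) a ha

/-- The integer form of the hypothesis `r > 1 + log₂ (h² + n₀)`. -/
lemma two_mul_lt_two_pow {h n0 r : ℕ} (hn0 : 1 ≤ n0)
    (hr : 1 + Real.logb 2 ((h : ℝ) ^ 2 + (n0 : ℝ)) < (r : ℝ)) : 2 * (h ^ 2 + n0) < 2 ^ r := by
  have hpos : (0 : ℝ) < (h : ℝ) ^ 2 + n0 := by
    have : (1 : ℝ) ≤ n0 := by exact_mod_cast hn0
    positivity
  have h1 : Real.logb 2 (2 * ((h : ℝ) ^ 2 + n0)) < r := by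
    rw [Real.logb_mul (by norm_num) hpos.ne', Real.logb_self_eq_one (by norm_num)]
    exact hr
  rw [Real.logb_lt_iff_lt_rpow (by norm_num) (by positivity), Real.rpow_natCast] at h1
  exact_mod_cast h1

/-! ### The induction on `k` -/

/-- For every `k ≥ 0`, every `1 ≤ h' < h` and every integer `m`, `r_{A_k,h'}(m) ≤ g`. -/
theorem stmt_13 (h g n0 r : ℕ) (hh : 2 ≤ h) (hg : 1 ≤ g) (hn0 : 1 ≤ n0)
    (f : ℤ → ℕ∞) (hf : ∀ n : ℤ, (n0 : ℤ) ≤ |n| → (g : ℕ∞) ≤ f n)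
    (hr : 1 + Real.logb 2 ((h : ℝ) ^ 2 + (n0 : ℝ)) < (r : ℝ))
    (γ : ℕ → ℕ) (hγ : StrictMono γ) (hγ0 : γ 0 = 0)
    (B : Set ℕ) (hBpos : ∀ b ∈ B, 0 < b) (hB : ∀ n : ℕ, repFnN B h n ≤ g) :
    ∀ k : ℕ, ∀ h' : ℕ, 1 ≤ h' → h' < h → ∀ m : ℤ,
      repFn (Aseq γ r h n0 f B k) h' m ≤ g := by
  have hR := two_mul_lt_two_pow hn0 hr
  have hhR : h < 2 ^ r := by nlinarith
  intro k
  simp only [repFn_eq]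
  induction k with
  | zero =>
    intro h' h1 hlt m
    refine msReps_insZeros (r := r) hγ hγ0 (hhR.trans_le (Nat.pow_le_pow_right (by norm_num) (by omega)))
      (fun n => (repFnN_eq B h n).symm.trans_le (hB n)) ?_ h1 hlt.le m
    rintro a ⟨ha, -⟩
    exact ha
  | succ k ih =>
    intro h' h1 hlt m
    rw [Aseq]
    split_ifs
    · obtain ⟨H, rfl⟩ : ∃ H, h = H + 1 := ⟨h - 1, by omega⟩
      have hu2 : u2 γ r (H + 1) (k + 1)
          = H * (2 ^ r * qval γ r k) + zseq (k + 1) := by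
        rw [u2, mval_div]
        push_cast
        ring
      rw [u1, mval_div, hu2]
      have hRz : 2 * (((H : ℤ) + 1) ^ 2 + n0) < 2 ^ r := by exact_mod_cast hR
      have hn : (1 : ℤ) ≤ n0 := by exact_mod_cast hn0
      have hHz : (1 : ℤ) ≤ H := by omega
      exact msReps_union hg (by rw [qval]; positivity) (by omega) (by nlinarith) (by nlinarith)
        ((abs_zseq_le _).trans (natCast_le_qval hγ r k))
        (Aseq_residue hγ hγ0 hh (by exact_mod_cast hhR.le) k k le_rfl)
        (fun h' h1 hle m => ih h' h1 (by omega) m) (by omega) m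
    · exact ih h' h1 hlt m
end
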